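/- Let 𝒜 be a completely separable NMAD-family on ℕ of cardinality 𝔠 such that for every M ∈ 𝒜* the set {A ∈ 𝒜 : A ∩ M is infinite} has cardinality 𝔠, and such that 𝒜 contains a countable subfamily which is a partition of ℕ. Then for every partition 𝒫 of ℕ into infinitely many infinite sets: S_𝒫 ≤_RK S_𝒜, but it is not the case that S_𝒫 ≤_TU S_𝒜. -/

import Mathlib

open Set

/-- `f[G] = {A : f⁻¹(A) ∈ G}`, the image (Rudin–Keisler) filter of a family of sets. -/
def mapFilter {α β : Type*} (f : α → β) (G : Set (Set α)) : Set (Set β) := {A | f ⁻¹' A ∈ G}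

/-- `F` is a (proper) filter of subsets. -/
def IsFilterFam {α : Type*} (F : Set (Set α)) : Prop :=
  Set.univ ∈ F ∧ (∀ A ∈ F, ∀ B : Set α, A ⊆ B → B ∈ F) ∧ (∀ A ∈ F, ∀ B ∈ F, A ∩ B ∈ F)

/-- A free filter: a proper filter containing all cofinite sets. -/
def IsFreeFilter {α : Type*} (F : Set (Set α)) : Prop :=
  IsFilterFam F ∧ (∀ A : Set α, Aᶜ.Finite → A ∈ F) ∧ ∅ ∉ F

/-- `S → F` : `S` is an infinite set converging to the filter `F`, i.e. `S ⊆* A` for all `A ∈ F`. -/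
def ConvTo {α : Type*} (S : Set α) (F : Set (Set α)) : Prop :=
  S.Infinite ∧ ∀ A ∈ F, (S \ A).Finite

/-- `F` is relatively equivalent to the Fréchet filter: some `A ∈ F` converges to `F`. -/
def RelFrechet {α : Type*} (F : Set (Set α)) : Prop := ∃ A ∈ F, ConvTo A F

/-- Rudin–Keisler order: `F ≤_RK G` iff `f[G] = F` for some surjection `f`. -/
def RKle {α : Type*} (F G : Set (Set α)) : Prop :=
  ∃ f : α → α, Function.Surjective f ∧ mapFilter f G = F

/-- `F ≈ G` : there is a bijection `f` with `f[F] = G`. -/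
def EquivFilter {α : Type*} (F G : Set (Set α)) : Prop :=
  ∃ f : α → α, Function.Bijective f ∧ mapFilter f F = G

/-- `F <_RK G` : `F ≤_RK G` and `¬ (F ≈ G)`. -/
def RKlt {α : Type*} (F G : Set (Set α)) : Prop := RKle F G ∧ ¬ EquivFilter F G

/-- An AD-family: an infinite family of infinite sets with pairwise finite intersections. -/
def IsADFamily {α : Type*} (𝒜 : Set (Set α)) : Prop :=
  𝒜.Infinite ∧ (∀ A ∈ 𝒜, A.Infinite) ∧ ∀ A ∈ 𝒜, ∀ B ∈ 𝒜, A ≠ B → (A ∩ B).Finite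

/-- The ideal generated by a family `𝒜`: sets almost covered by finitely many members of `𝒜`. -/
def idealGen {α : Type*} (𝒜 : Set (Set α)) : Set (Set α) :=
  {X | ∃ 𝒜' : Finset (Set α), ↑𝒜' ⊆ 𝒜 ∧ (X \ ⋃₀ ↑𝒜').Finite}

/-- `S_𝒜`: the filter dual to the ideal generated by `𝒜`. -/
def SFam {α : Type*} (𝒜 : Set (Set α)) : Set (Set α) := {F | Fᶜ ∈ idealGen 𝒜}

/-- `F_𝒟 = {F : D ⊆* F for every D ∈ 𝒟}`. -/
def FFam {α : Type*} (𝒟 : Set (Set α)) : Set (Set α) := {F | ∀ D ∈ 𝒟, (D \ F).Finite}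

/-- A nowhere MAD family: every set outside the generated ideal contains an infinite set
almost disjoint from every member of `𝒜`. -/
def IsNMAD {α : Type*} (𝒜 : Set (Set α)) : Prop :=
  IsADFamily 𝒜 ∧ ∀ X : Set α, X ∉ idealGen 𝒜 →
    ∃ B ⊆ X, B.Infinite ∧ ∀ A ∈ 𝒜, (B ∩ A).Finite

/-- A partition of `ℕ` into infinitely many infinite sets. -/
def IsInfPartition (𝒬 : Set (Set ℕ)) : Prop :=
  𝒬.Infinite ∧ (∀ P ∈ 𝒬, P.Infinite) ∧ ⋃₀ 𝒬 = Set.univ ∧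
    ∀ P ∈ 𝒬, ∀ Q ∈ 𝒬, P ≠ Q → P ∩ Q = ∅

/-- `F` is a Fréchet–Urysohn filter: every `F`-positive set contains a sequence converging to `F`. -/
def IsFUFilter {α : Type*} (F : Set (Set α)) : Prop :=
  ∀ A : Set α, Aᶜ ∉ F → ∃ S ⊆ A, ConvTo S F

/-- The trace filter `F|_A = {G ∩ A : G ∈ F}`. -/
def traceFam {α : Type*} (F : Set (Set α)) (A : Set α) : Set (Set α) := {S | ∃ G ∈ F, S = G ∩ A}

/-- Todorčević–Uzcátegui order: there are `A ∈ G⁺`, `B ∈ F` and a bijection `f : A → B`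
with `f[G|_A] = F|_B`. -/
def TUle {α : Type*} (F G : Set (Set α)) : Prop :=
  ∃ A : Set α, Aᶜ ∉ G ∧ ∃ B ∈ F, ∃ f : α → α, Set.BijOn f A B ∧
    {Y : Set α | Y ⊆ B ∧ A ∩ f ⁻¹' Y ∈ traceFam G A} = traceFam F B

/-- `𝒜*`: infinite sets meeting infinitely many members of `𝒜` in an infinite set. -/
def starFam (𝒜 : Set (Set ℕ)) : Set (Set ℕ) :=
  {M | M.Infinite ∧ {A ∈ 𝒜 | (A ∩ M).Infinite}.Infinite}

/-- Completely separable AD-family. -/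
def CompletelySeparable (𝒜 : Set (Set ℕ)) : Prop := ∀ M ∈ starFam 𝒜, ∃ A ∈ 𝒜, A ⊆ M

/-!
An infinite partition `P` generates the ideal of all sets meeting only finitely many pieces `P i`.

For `S_𝒬 ≤_RK S_𝒜`, map the piece `A n ∈ 𝒜` onto the `n`-th piece of `𝒬` with all fibers
infinite. If `f⁻¹(T)` is almost covered by finitely many members of `𝒜`, then each `A n` that
`f⁻¹(T)` meets contains a whole infinite fiber of it, so almost disjointness makes `A n` one of
those members.

For `¬ S_𝒬 ≤_TU S_𝒜`, a bijection witnessing `≤_TU` would identify `I(𝒜)` restricted to some `X`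
with the ideal of those `Z ⊆ X` on which an index function `h` with countable range has finite
image. Each infinite fiber of `h` on `X` lies in `I(𝒜)`, so some `A ∈ 𝒜` meets it in an infinite
set; since `h` takes finitely many values on each `A ∩ X`, infinitely many `A ∈ 𝒜` meet `X` in an
infinite set. Each of these has `A ∩ X ⊆ h⁻¹(F)` for some finite `F`, and `X ∩ h⁻¹(F) ∈ I(𝒜)` has
infinite intersection with only finitely many `A`, so there are only countably many of them.
-/

section Ideal

variable {α : Type*} {𝒜 ℬ : Set (Set α)} {X Y : Set α}

lemma mem_idealGen_iff :
    X ∈ idealGen 𝒜 ↔ ∃ F : Set (Set α), F.Finite ∧ F ⊆ 𝒜 ∧ (X \ ⋃₀ F).Finite :=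
  ⟨fun ⟨F, hF, hX⟩ => ⟨F, F.finite_toSet, hF, hX⟩, fun ⟨F, hFfin, hF, hX⟩ =>
    ⟨hFfin.toFinset, by rwa [hFfin.coe_toFinset], by rwa [hFfin.coe_toFinset]⟩⟩

lemma mem_idealGen_of_subset (hXY : X ⊆ Y) (hY : Y ∈ idealGen 𝒜) : X ∈ idealGen 𝒜 := by
  obtain ⟨F, hF, hYF⟩ := hY
  exact ⟨F, hF, hYF.subset (sdiff_subset_sdiff_left hXY)⟩

lemma idealGen_mono (h : 𝒜 ⊆ ℬ) : idealGen 𝒜 ⊆ idealGen ℬ :=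
  fun _ ⟨F, hF, hX⟩ => ⟨F, hF.trans h, hX⟩

lemma subset_idealGen : 𝒜 ⊆ idealGen 𝒜 := fun A hA =>
  mem_idealGen_iff.2 ⟨{A}, finite_singleton A, singleton_subset_iff.2 hA, by simp⟩

lemma exists_infinite_inter_of_mem_idealGen (hX : X ∈ idealGen 𝒜) (hXinf : X.Infinite) :
    ∃ A ∈ 𝒜, (A ∩ X).Infinite := by
  obtain ⟨F, hF, hXF⟩ := hX
  by_contra! hfin
  refine hXinf ((hXF.union (F.finite_toSet.biUnion fun A hA => hfin A (hF hA))).subset ?_)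
  intro x hx
  by_cases hxF : x ∈ ⋃₀ (F : Set (Set α))
  · obtain ⟨A, hA, hxA⟩ := hxF
    exact .inr (mem_biUnion hA ⟨hxA, hx⟩)
  · exact .inl ⟨hx, hxF⟩

lemma IsADFamily.finite_setOf_infinite_inter (h𝒜 : IsADFamily 𝒜) (hX : X ∈ idealGen 𝒜) :
    {A ∈ 𝒜 | (A ∩ X).Infinite}.Finite := by
  obtain ⟨F, hF, hXF⟩ := hX
  refine F.finite_toSet.subset fun A ⟨hA, hAX⟩ => ?_
  by_contra hAF
  have hAF_fin : (⋃ B ∈ F, A ∩ B).Finite :=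
    F.finite_toSet.biUnion fun B hB => h𝒜.2.2 A hA B (hF hB) (ne_of_mem_of_not_mem hB hAF).symm
  refine hAX ((hXF.union hAF_fin).subset fun x ⟨hxA, hxX⟩ => ?_)
  by_cases hxF : x ∈ ⋃₀ (F : Set (Set α))
  · obtain ⟨B, hB, hxB⟩ := hxF
    exact .inr (mem_biUnion hB ⟨hxA, hxB⟩)
  · exact .inl ⟨hxX, hxF⟩

end Ideal

section Partition

variable {α ι : Type*} {P : ι → Set α}

lemma preimage_index_singleton (hP : IndexedPartition P) (i : ι) : hP.index ⁻¹' {i} = P i :=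
  (hP.eq i).symm

lemma mem_idealGen_range_iff (hP : IndexedPartition P) {T : Set α} :
    T ∈ idealGen (range P) ↔ (hP.index '' T).Finite := by
  rw [mem_idealGen_iff]
  constructor
  · rintro ⟨F, hF, hFP, hTF⟩
    have hpiece : ∀ Q ∈ F, (hP.index '' Q).Finite := by
      intro Q hQ
      obtain ⟨i, rfl⟩ := hFP hQ
      exact (finite_singleton i).subset (image_subset_iff.2 (preimage_index_singleton hP i).ge)
    have hcover : T ⊆ (T \ ⋃₀ F) ∪ ⋃₀ F := by rw [sdiff_union_self]; exact subset_union_left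
    refine Finite.subset ?_ (image_mono hcover)
    rw [image_union, image_sUnion]
    exact (hTF.image _).union ((hF.image _).sUnion (forall_mem_image.2 hpiece))
  · intro hT
    refine ⟨P '' (hP.index '' T), hT.image P, image_subset_range _ _, ?_⟩
    rw [sdiff_eq_empty.2]
    · exact finite_empty
    · exact fun x hx => ⟨_, mem_image_of_mem P (mem_image_of_mem _ hx), hP.mem_index x⟩

lemma countable_of_indexedPartition [Countable α] (hP : IndexedPartition P) : Countable ι :=
  (Function.LeftInverse.injective hP.index_some).countable

lemma IsInfPartition.exists_indexedPartition {𝒬 : Set (Set ℕ)} (h𝒬 : IsInfPartition 𝒬) :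
    ∃ P : ℕ → Set ℕ, range P = 𝒬 ∧ (∀ n, (P n).Infinite) ∧ Nonempty (IndexedPartition P) := by
  obtain ⟨hinf, hparts, hcov, hdisj⟩ := h𝒬
  have h𝒬P : IndexedPartition ((↑) : 𝒬 → Set ℕ) := .mk' _
    (fun P Q hPQ => disjoint_iff_inter_eq_empty.2
      (hdisj P P.2 Q Q.2 (Subtype.val_injective.ne hPQ)))
    (fun P => (hparts P P.2).nonempty)
    (fun x => by
      obtain ⟨P, hP, hx⟩ := (hcov ▸ mem_univ x : x ∈ ⋃₀ 𝒬)
      exact ⟨⟨P, hP⟩, hx⟩)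
  have := countable_of_indexedPartition h𝒬P
  have := hinf.to_subtype
  obtain ⟨e⟩ := nonempty_equiv_of_countable (α := ℕ) (β := 𝒬)
  refine ⟨(↑) ∘ e, ?_, fun n => hparts _ (e n).2, ⟨?_⟩⟩
  · rw [e.surjective.range_comp, Subtype.range_coe]
  · exact .mk' _ (h𝒬P.disjoint.comp_of_injective e.injective) (fun n => (hparts _ (e n).2).nonempty)
      (fun x => ⟨e.symm (h𝒬P.index x), by simpa using h𝒬P.mem_index x⟩)

end Partition

section RudinKeisler

lemma exists_comp_eq_and_infinite_fibers {α β ι : Type*} [Countable α] [Countable β]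
    {a : α → ι} {p : β → ι} (ha : ∀ i, (a ⁻¹' {i}).Infinite) (hp : Function.Surjective p) :
    ∃ f : α → β, p ∘ f = a ∧ ∀ y, (f ⁻¹' {y}).Infinite := by
  have hequiv (i : ι) : Nonempty (a ⁻¹' {i} ≃ p ⁻¹' {i} × ℕ) := by
    have := (ha i).to_subtype
    have : Nonempty (p ⁻¹' {i}) := (hp i).elim fun y hy => ⟨y, hy⟩
    exact nonempty_equiv_of_countable
  let e := fun i => (hequiv i).some
  let f : α → β := fun x => (e (a x) ⟨x, rfl⟩).1
  have hf : ∀ i (x : a ⁻¹' {i}), f x = (e i x).1 := by rintro _ ⟨x, rfl⟩; rfl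
  refine ⟨f, funext fun x => (e (a x) ⟨x, rfl⟩).1.2, fun y => ?_⟩
  let s : ℕ → α := fun k => (e (p y)).symm (⟨y, rfl⟩, k)
  have hs : Function.Injective s := Subtype.val_injective.comp <|
    (e (p y)).symm.injective.comp (Prod.mk_right_injective _)
  refine (infinite_range_of_injective hs).mono (range_subset_iff.2 fun k => ?_)
  simp only [s, mem_preimage, hf, Equiv.apply_symm_apply, mem_singleton_iff]

variable {α ι : Type*} {𝒜 : Set (Set α)} {A P : ι → Set α}

lemma IsADFamily.mem_idealGen_iff_finite_image_index (h𝒜 : IsADFamily 𝒜)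
    (hA : IndexedPartition A) (hmem : ∀ i, A i ∈ 𝒜) {S : Set α}
    (hS : ∀ x ∈ S, (A (hA.index x) ∩ S).Infinite) :
    S ∈ idealGen 𝒜 ↔ (hA.index '' S).Finite := by
  constructor
  · intro hS𝒜
    have hinj : Function.Injective A := fun i j hij =>
      hA.eq_of_mem (hA.some_mem i) (hij ▸ hA.some_mem i)
    refine ((h𝒜.finite_setOf_infinite_inter hS𝒜).preimage hinj.injOn).subset ?_
    exact image_subset_iff.2 fun x hx => ⟨hmem _, hS x hx⟩
  · exact fun hfin => idealGen_mono (range_subset_iff.2 hmem) ((mem_idealGen_range_iff hA).2 hfin)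

theorem IsADFamily.rkle_of_indexedPartition [Countable α] (h𝒜 : IsADFamily 𝒜)
    (hA : IndexedPartition A) (hmem : ∀ i, A i ∈ 𝒜) (hP : IndexedPartition P) :
    RKle (SFam (range P)) (SFam 𝒜) := by
  have hAinf (i : ι) : (hA.index ⁻¹' {i}).Infinite := by
    rw [preimage_index_singleton]
    exact h𝒜.2.1 _ (hmem i)
  obtain ⟨f, hcomp, hfib⟩ := exists_comp_eq_and_infinite_fibers hAinf
    (Function.RightInverse.surjective hP.index_some)
  have hf : Function.Surjective f := fun y => (hfib y).nonempty
  have hsat (T : Set α) : ∀ x ∈ f ⁻¹' T, (A (hA.index x) ∩ f ⁻¹' T).Infinite := by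
    refine fun x hx => (hfib (f x)).mono fun z (hz : f z = f x) => ⟨?_, ?_⟩
    · rw [hA.mem_iff_index_eq, ← hcomp, Function.comp_apply, Function.comp_apply, hz]
    · rwa [mem_preimage, hz]
  have hideal (T : Set α) : f ⁻¹' T ∈ idealGen 𝒜 ↔ T ∈ idealGen (range P) := by
    rw [h𝒜.mem_idealGen_iff_finite_image_index hA hmem (hsat T), mem_idealGen_range_iff hP,
      ← hcomp, image_comp, image_preimage_eq T hf]
  exact ⟨f, hf, ext fun T => hideal Tᶜ⟩

end RudinKeisler

section TodorcevicUzcategui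

variable {α β ι : Type*} {𝒜 𝒬 : Set (Set α)} {X : Set α}

lemma sdiff_mem_traceFam_SFam_iff {Z : Set α} (hZ : Z ⊆ X) :
    X \ Z ∈ traceFam (SFam 𝒜) X ↔ Z ∈ idealGen 𝒜 := by
  constructor
  · rintro ⟨G, hG, hXZ⟩
    have hZG : Z ⊆ Gᶜ := fun x hx hxG => (hXZ.ge ⟨hxG, hZ hx⟩).2 hx
    exact mem_idealGen_of_subset hZG hG
  · intro h
    refine ⟨Zᶜ, ?_, sdiff_eq_compl_inter⟩
    rwa [SFam, mem_ofPred_eq, compl_compl]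

lemma TUle.exists_bijOn (h : TUle (SFam 𝒬) (SFam 𝒜)) :
    ∃ (X B : Set α) (f : α → α), Bᶜ ∈ idealGen 𝒬 ∧ BijOn f X B ∧
      ∀ Z ⊆ X, (Z ∈ idealGen 𝒜 ↔ f '' Z ∈ idealGen 𝒬) := by
  obtain ⟨X, -, B, hB, f, hf, htrace⟩ := h
  refine ⟨X, B, f, hB, hf, fun Z hZ => ?_⟩
  have hpre : X ∩ f ⁻¹' (B \ f '' Z) = X \ Z := by
    ext x
    constructor
    · exact fun ⟨hx, hfx⟩ => ⟨hx, fun hxZ => hfx.2 (mem_image_of_mem f hxZ)⟩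
    · exact fun ⟨hx, hxZ⟩ =>
        ⟨hx, hf.mapsTo hx, fun hfx => hxZ ((hf.injOn.mem_image_iff hZ hx).1 hfx)⟩
  rw [← sdiff_mem_traceFam_SFam_iff hZ,
    ← sdiff_mem_traceFam_SFam_iff (image_subset_iff.2 (hZ.trans hf.mapsTo)), ← htrace,
    mem_ofPred_eq, hpre]
  exact (and_iff_right sdiff_subset).symm

lemma infinite_setOf_infinite_fiber_comp [Infinite ι] {B : Set β} {p : β → ι} {f : α → β}
    (hp : ∀ i, (p ⁻¹' {i}).Infinite) (hB : (p '' Bᶜ).Finite) (hf : SurjOn f X B) :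
    {i | (X ∩ (p ∘ f) ⁻¹' {i}).Infinite}.Infinite := by
  refine hB.infinite_compl.mono fun i hi => ((hp i).mono fun y hy => ?_).of_image f
  have hyB : y ∈ B := by
    by_contra hyB
    exact hi ⟨y, hyB, hy⟩
  obtain ⟨x, hx, rfl⟩ := hf hyB
  exact ⟨x, ⟨hx, hy⟩, rfl⟩

lemma infinite_setOf_infinite_inter {h : α → ι}
    (hX : ∀ Z ⊆ X, (Z ∈ idealGen 𝒜 ↔ (h '' Z).Finite))
    (hfib : {i | (X ∩ h ⁻¹' {i}).Infinite}.Infinite) : {A ∈ 𝒜 | (A ∩ X).Infinite}.Infinite := by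
  intro hfin
  have himage : ∀ A ∈ {A ∈ 𝒜 | (A ∩ X).Infinite}, (h '' (A ∩ X)).Finite := fun A hA =>
    (hX _ inter_subset_right).1 (mem_idealGen_of_subset inter_subset_left (subset_idealGen hA.1))
  refine hfib ((hfin.biUnion himage).subset fun i hi => ?_)
  have hfiber : X ∩ h ⁻¹' {i} ∈ idealGen 𝒜 := (hX _ inter_subset_left).2 <|
    (finite_singleton i).subset (image_subset_iff.2 inter_subset_right)
  obtain ⟨A, hA, hAi⟩ := exists_infinite_inter_of_mem_idealGen hfiber hi
  obtain ⟨x, hxA, hxX, hxi⟩ := hAi.nonempty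
  exact mem_biUnion ⟨hA, hAi.mono (inter_subset_inter_right A inter_subset_left)⟩
    ⟨x, ⟨hxA, hxX⟩, hxi⟩

lemma IsADFamily.countable_setOf_infinite_inter [Countable ι] (h𝒜 : IsADFamily 𝒜) {h : α → ι}
    (hX : ∀ Z ⊆ X, (Z ∈ idealGen 𝒜 ↔ (h '' Z).Finite)) :
    {A ∈ 𝒜 | (A ∩ X).Infinite}.Countable := by
  have hfinite (F : Finset ι) : {A ∈ 𝒜 | (A ∩ (X ∩ h ⁻¹' F)).Infinite}.Finite :=
    h𝒜.finite_setOf_infinite_inter <| (hX _ inter_subset_left).2 <|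
      F.finite_toSet.subset (image_subset_iff.2 inter_subset_right)
  refine (countable_iUnion fun F => (hfinite F).countable).mono fun A ⟨hA, hAX⟩ => ?_
  have himage : (h '' (A ∩ X)).Finite :=
    (hX _ inter_subset_right).1 (mem_idealGen_of_subset inter_subset_left (subset_idealGen hA))
  refine mem_iUnion.2 ⟨himage.toFinset, hA, hAX.mono fun x hx => ⟨hx.1, hx.2, ?_⟩⟩
  rw [himage.coe_toFinset]
  exact mem_image_of_mem h hx

theorem IsADFamily.not_tule_of_indexedPartition [Infinite ι] {𝒜 : Set (Set ℕ)}
    (h𝒜 : IsADFamily 𝒜)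
    (hbig : ∀ M ∈ starFam 𝒜, ¬ {A ∈ 𝒜 | (A ∩ M).Infinite}.Countable)
    {P : ι → Set ℕ} (hP : IndexedPartition P) (hPinf : ∀ i, (P i).Infinite) :
    ¬ TUle (SFam (range P)) (SFam 𝒜) := by
  intro hTU
  obtain ⟨X, B, f, hB, hf, hideal⟩ := hTU.exists_bijOn
  have := countable_of_indexedPartition hP
  have hX : ∀ Z ⊆ X, (Z ∈ idealGen 𝒜 ↔ ((hP.index ∘ f) '' Z).Finite) := fun Z hZ => by
    rw [hideal Z hZ, mem_idealGen_range_iff hP, image_comp]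
  have hfib : {i | (X ∩ (hP.index ∘ f) ⁻¹' {i}).Infinite}.Infinite :=
    infinite_setOf_infinite_fiber_comp (fun i => (preimage_index_singleton hP i).symm ▸ hPinf i)
      ((mem_idealGen_range_iff hP).1 hB) hf.surjOn
  have hXinf : X.Infinite := hfib.nonempty.elim fun _ hi => hi.mono inter_subset_left
  exact hbig X ⟨hXinf, infinite_setOf_infinite_inter hX hfib⟩ (h𝒜.countable_setOf_infinite_inter hX)

end TodorcevicUzcategui

theorem statement11_general (𝒜 : Set (Set ℕ)) (h𝒜 : IsADFamily 𝒜)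
    (hbig : ∀ M ∈ starFam 𝒜, ¬ {A ∈ 𝒜 | (A ∩ M).Infinite}.Countable)
    (A : ℕ → Set ℕ) (hmem : ∀ n, A n ∈ 𝒜)
    (hdisj : ∀ m n : ℕ, m ≠ n → A m ∩ A n = ∅) (hcov : (⋃ n, A n) = Set.univ) :
    ∀ 𝒬 : Set (Set ℕ), IsInfPartition 𝒬 →
      RKle (SFam 𝒬) (SFam 𝒜) ∧ ¬ TUle (SFam 𝒬) (SFam 𝒜) := by
  intro 𝒬 h𝒬
  have hA : IndexedPartition A := .mk' A
    (fun m n hmn => disjoint_iff_inter_eq_empty.2 (hdisj m n hmn))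
    (fun n => (h𝒜.2.1 _ (hmem n)).nonempty) (iUnion_eq_univ_iff.1 hcov)
  obtain ⟨P, rfl, hPinf, ⟨hP⟩⟩ := h𝒬.exists_indexedPartition
  exact ⟨h𝒜.rkle_of_indexedPartition hA hmem hP, h𝒜.not_tule_of_indexedPartition hbig hP hPinf⟩

/-- For a completely separable NMAD family `𝒜` of size continuum as described,
`S_𝒬 ≤_RK S_𝒜` but not `S_𝒬 ≤_TU S_𝒜`. -/
theorem statement11 (𝒜 : Set (Set ℕ)) (h𝒜 : IsNMAD 𝒜) (hsep : CompletelySeparable 𝒜)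
    (hcard : Cardinal.mk ↥𝒜 = Cardinal.continuum)
    (hbig : ∀ M ∈ starFam 𝒜, Cardinal.mk ↥{A ∈ 𝒜 | (A ∩ M).Infinite} = Cardinal.continuum)
    (A : ℕ → Set ℕ) (hmem : ∀ n, A n ∈ 𝒜) (hinj : Function.Injective A)
    (hdisj : ∀ m n : ℕ, m ≠ n → A m ∩ A n = ∅) (hcov : (⋃ n, A n) = Set.univ) :
    ∀ 𝒬 : Set (Set ℕ), IsInfPartition 𝒬 →
      RKle (SFam 𝒬) (SFam 𝒜) ∧ ¬ TUle (SFam 𝒬) (SFam 𝒜) := by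
  exact statement11_general 𝒜 h𝒜.1 (fun M hM hcount =>
    Cardinal.aleph0_lt_continuum.not_ge (hbig M hM ▸ hcount.le_aleph0)) A hmem hdisj hcov
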